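/- Let c, r ≥ 1 and n ≥ 1. Then, as polynomials in x_1,…,x_n (Kirillov's identity): ( s^{[n]}_{c^r} )² = s^{[n]}_{c^{r−1}} · s^{[n]}_{c^{r+1}} + s^{[n]}_{(c−1)^r} · s^{[n]}_{(c+1)^r}. -/

import Mathlib

/-- A semistandard Young tableau of shape `(lam 0, lam 1, …, lam (k-1))` (so `lam i` is the
length of the `(i+1)`-st row), with entries in `{a, a+1, …, b}`: rows weakly increase,
columns strictly increase.  Entries outside the shape are `0`. -/
structure SSYT (k : ℕ) (lam : ℕ → ℤ) (a b : ℕ) where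
  entry : ℕ → ℕ → ℕ
  zero_outside : ∀ i j : ℕ, ¬(i < k ∧ (j : ℤ) < lam i) → entry i j = 0
  lower : ∀ i j : ℕ, i < k → (j : ℤ) < lam i → a ≤ entry i j
  upper : ∀ i j : ℕ, i < k → (j : ℤ) < lam i → entry i j ≤ b
  row_weak : ∀ i j₁ j₂ : ℕ, i < k → j₁ ≤ j₂ → (j₂ : ℤ) < lam i → entry i j₁ ≤ entry i j₂
  col_strict : ∀ i₁ i₂ j : ℕ, i₁ < i₂ → i₂ < k → (j : ℤ) < lam i₂ → entry i₁ j < entry i₂ j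

/-- The monomial `Π_i x_i^{m(i,T)}` of a tableau: the product of `x_{T(c)}` over the
cells `c` of the shape. -/
noncomputable def SSYT.weight {k : ℕ} {lam : ℕ → ℤ} {a b : ℕ} (T : SSYT k lam a b) :
    MvPolynomial ℕ ℤ :=
  ∏ i ∈ Finset.range k, ∏ j ∈ Finset.range (lam i).toNat, MvPolynomial.X (T.entry i j)

/-- `(lam 0, …, lam (k-1))` is a partition: weakly decreasing with nonnegative entries. -/
def IsPartitionSeq (k : ℕ) (lam : ℕ → ℤ) : Prop :=
  (∀ i, i + 1 < k → lam (i + 1) ≤ lam i) ∧ (∀ i, i < k → 0 ≤ lam i)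

/-- The Schur polynomial `s^{[a,b]}_lam = Σ_T Π_i x_i^{m(i,T)}`, the sum running over all
semistandard Young tableaux of shape `lam` with entries in `{a,…,b}`; by convention it is
`0` if `lam` is not a partition. -/
noncomputable def schur (k : ℕ) (lam : ℕ → ℤ) (a b : ℕ) : MvPolynomial ℕ ℤ :=
  letI := Classical.dec (IsPartitionSeq k lam)
  if IsPartitionSeq k lam then ∑ᶠ T : SSYT k lam a b, T.weight else 0

/-!
Two facts combine.

*Jacobi–Trudi*: `s_lam = det (h_{lam_i - i + j})`, because both sides satisfy the same branching
rule over the shapes `mu` for which `lam / mu` is a horizontal strip. In a tableau, the copies of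
the largest letter occupy such a strip. In the determinant, adjoining a variable `x` turns the
complete homogeneous polynomials `g` into `h` with `h m = g m + x * h (m - 1)`; unrolling this
recurrence in row `i` until it meets row `i + 1`, subtracting a multiple of that row, and expanding
multilinearly leaves one determinant for each `mu`.

*Desnanot–Jacobi condensation*: for the rectangle `c^(r+1)` the Jacobi–Trudi matrix is a Toeplitz
matrix, and deleting its first or last row and first or last column gives the Jacobi–Trudi matrices
of `c^r` (twice), `(c-1)^r` and `(c+1)^r`, while its central minor is that of `c^(r-1)`.
-/

open Finset Matrix

section DesnanotJacobi

variable {R m l : Type*} [CommRing R] [Fintype m] [DecidableEq m] [Fintype l] [DecidableEq l]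

theorem mul_fromBlocks_one_adjugate (M : Matrix (m ⊕ l) (m ⊕ l) R) :
    M * fromBlocks 1 M.adjugate.toBlocks₁₂ 0 M.adjugate.toBlocks₂₂ =
      fromBlocks M.toBlocks₁₁ 0 M.toBlocks₂₁ (M.det • 1) := by
  have hadj : fromBlocks M.toBlocks₁₁ M.toBlocks₁₂ M.toBlocks₂₁ M.toBlocks₂₂ *
      fromBlocks M.adjugate.toBlocks₁₁ M.adjugate.toBlocks₁₂
        M.adjugate.toBlocks₂₁ M.adjugate.toBlocks₂₂ =
      fromBlocks (M.det • 1) 0 0 (M.det • 1) := by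
    rw [fromBlocks_toBlocks, fromBlocks_toBlocks, mul_adjugate, ← fromBlocks_one,
      fromBlocks_smul, smul_zero, smul_zero]
  rw [fromBlocks_multiply, fromBlocks_inj] at hadj
  nth_rw 1 [← fromBlocks_toBlocks M]
  simp only [fromBlocks_multiply, Matrix.mul_one, Matrix.mul_zero, add_zero, hadj]

theorem det_toBlocks₁₁_mul_det_pow_card (M : Matrix (m ⊕ l) (m ⊕ l) R) :
    M.toBlocks₁₁.det * M.det ^ Fintype.card l = M.det * M.adjugate.toBlocks₂₂.det := by
  simpa using (congrArg det (mul_fromBlocks_one_adjugate M)).symm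

theorem det_adjugate_toBlocks₂₂ [Nonempty l] (M : Matrix (m ⊕ l) (m ⊕ l) R) :
    M.adjugate.toBlocks₂₂.det = M.toBlocks₁₁.det * M.det ^ (Fintype.card l - 1) := by
  -- It suffices to treat the generic matrix, whose determinant can be cancelled.
  let G := mvPolynomialX (m ⊕ l) (m ⊕ l) ℤ
  suffices generic : G.adjugate.toBlocks₂₂.det =
      G.toBlocks₁₁.det * G.det ^ (Fintype.card l - 1) by
    let φ := MvPolynomial.aeval (R := ℤ) fun p : (m ⊕ l) × (m ⊕ l) ↦ M p.1 p.2
    have hφ : φ.mapMatrix G = M := mvPolynomialX_mapMatrix_aeval ℤ M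
    have hadj : φ.mapMatrix G.adjugate.toBlocks₂₂ = M.adjugate.toBlocks₂₂ := by
      rw [← hφ, ← AlgHom.map_adjugate]; rfl
    have hblock : φ.mapMatrix G.toBlocks₁₁ = M.toBlocks₁₁ := by
      rw [← hφ]; rfl
    simpa only [map_mul, map_pow, AlgHom.map_det, hφ, hadj, hblock] using congrArg φ generic
  apply mul_left_cancel₀ (show G.det ≠ 0 from det_mvPolynomialX_ne_zero _ ℤ)
  rw [← det_toBlocks₁₁_mul_det_pow_card, mul_left_comm, mul_pow_sub_one Fintype.card_ne_zero]

theorem desnanot_jacobi {k : ℕ} (M : Matrix (Fin (k + 2)) (Fin (k + 2)) R) :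
    (M.submatrix Fin.succ Fin.succ).det * (M.submatrix Fin.castSucc Fin.castSucc).det -
        (M.submatrix Fin.succ Fin.castSucc).det * (M.submatrix Fin.castSucc Fin.succ).det =
      (M.submatrix (Fin.succ ∘ Fin.castSucc) (Fin.succ ∘ Fin.castSucc)).det * M.det := by
  let e : Fin k ⊕ Fin 2 ≃ Fin (k + 2) := finSumFinEquiv.trans (finRotate (k + 2))
  have e_inl : e ∘ Sum.inl = Fin.succ ∘ Fin.castSucc := by
    funext i
    exact finRotate_of_lt (by lia : (i : ℕ) < k + 1)
  have e_zero : e (Sum.inr 0) = Fin.last (k + 1) := finRotate_of_lt (Nat.lt_succ_self k)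
  have e_one : e (Sum.inr 1) = 0 := finRotate_last
  have inner : (M.submatrix e e).toBlocks₁₁ =
      M.submatrix (Fin.succ ∘ Fin.castSucc) (Fin.succ ∘ Fin.castSucc) := by
    rw [← e_inl]; rfl
  have minors := det_adjugate_toBlocks₂₂ (M.submatrix e e)
  have sign_sq : ((-1 : R) ^ (k + 1)) ^ 2 = 1 := by rw [← pow_mul, mul_comm, pow_mul]; simp
  rw [det_submatrix_equiv_self, adjugate_submatrix_equiv_self, inner, det_fin_two] at minors
  simp only [toBlocks₂₂, of_apply, submatrix_apply, e_zero, e_one,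
    adjugate_fin_succ_eq_det_submatrix, Fin.succAbove_zero, Fin.succAbove_last, Fin.val_zero,
    Fin.val_last, add_zero, zero_add, pow_zero, one_mul, Fintype.card_fin, Nat.add_one_sub_one,
    pow_one, Even.neg_one_pow ⟨k + 1, rfl⟩] at minors
  linear_combination minors + (M.submatrix Fin.succ Fin.castSucc).det *
    (M.submatrix Fin.castSucc Fin.succ).det * sign_sq

end DesnanotJacobi

section RowOperations

variable {R : Type*} [CommRing R]

theorem det_eq_of_forall_row_eq_smul_add_succ {n : ℕ} {A B : Matrix (Fin (n + 1)) (Fin (n + 1)) R}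
    (c : Fin n → R) (hlast : ∀ j, A (Fin.last n) j = B (Fin.last n) j)
    (hcastSucc : ∀ i j, A i.castSucc j = B i.castSucc j + c i * A i.succ j) : A.det = B.det := by
  rw [← det_submatrix_equiv_self Fin.revPerm A, ← det_submatrix_equiv_self Fin.revPerm B]
  apply det_eq_of_forall_row_eq_smul_add_pred (fun i ↦ c i.rev)
  · simp [hlast]
  · simp [Fin.rev_succ, Fin.rev_castSucc, hcastSucc]

theorem det_sum_smul_row {m α : Type*} [Fintype m] [DecidableEq m] (s : m → Finset α)
    (w : m → α → R) (v : m → α → m → R) :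
    det (of fun i j ↦ ∑ u ∈ s i, w i u * v i u j) =
      ∑ f ∈ Fintype.piFinset s, (∏ i, w i (f i)) * det (of fun i ↦ v i (f i)) := by
  have expand := (detRowAlternating (n := m) (R := R)).toMultilinearMap.map_sum_finset
    (fun i u j ↦ w i u * v i u j) s
  simp only [← det_mul_column]
  refine Eq.trans (congrArg det ?_) expand
  ext i j
  simp only [of_apply, Finset.sum_apply]

end RowOperations

section CompleteHomogeneous

variable {R ι : Type*} [CommSemiring R] [DecidableEq ι]

/-- The complete homogeneous symmetric polynomial of degree `m` evaluated at the elements `x i`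
for `i ∈ S`: the sum of all monomials of degree `m`. The degree is an integer, with value `0` in
negative degree, as needed for the entries of the Jacobi–Trudi matrix. -/
def completeHomogeneous (x : ι → R) (S : Finset ι) : ℤ → R
  | Int.ofNat d => ∑ s ∈ S.sym d, ((s : Multiset ι).map x).prod
  | Int.negSucc _ => 0

theorem completeHomogeneous_of_neg (x : ι → R) (S : Finset ι) {m : ℤ} (hm : m < 0) :
    completeHomogeneous x S m = 0 := by
  obtain ⟨d, rfl⟩ := Int.eq_negSucc_of_lt_zero hm
  rfl

theorem completeHomogeneous_natCast (x : ι → R) (S : Finset ι) (d : ℕ) :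
    completeHomogeneous x S d = ∑ s ∈ S.sym d, ((s : Multiset ι).map x).prod := rfl

theorem completeHomogeneous_zero (x : ι → R) (S : Finset ι) : completeHomogeneous x S 0 = 1 := by
  refine (completeHomogeneous_natCast x S 0).trans ?_
  rw [sym_zero, sum_singleton]
  exact Multiset.prod_zero

theorem completeHomogeneous_empty (x : ι → R) {m : ℤ} (hm : m ≠ 0) :
    completeHomogeneous x ∅ m = 0 := by
  match m with
  | Int.ofNat 0 => exact absurd rfl hm
  | Int.ofNat (d + 1) => simp [completeHomogeneous]
  | Int.negSucc _ => rfl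

theorem filter_notMem_sym_insert {a : ι} {S : Finset ι} (ha : a ∉ S) (d : ℕ) :
    {s ∈ (insert a S).sym d | a ∉ s} = S.sym d := by
  ext s
  simp only [mem_filter, mem_sym_iff, mem_insert]
  grind

theorem filter_mem_sym_succ {a : ι} {S : Finset ι} (ha : a ∈ S) (d : ℕ) :
    {s ∈ S.sym (d + 1) | a ∈ s} = (S.sym d).image (Sym.cons a) := by
  ext s
  simp only [mem_filter, mem_image, mem_sym_iff]
  constructor
  · rintro ⟨hS, has⟩
    obtain ⟨t, rfl⟩ := Sym.exists_cons_of_mem has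
    exact ⟨t, fun b hb ↦ hS b (Sym.mem_cons_of_mem hb), rfl⟩
  · rintro ⟨t, ht, rfl⟩
    exact ⟨by simpa [ha] using ht, Sym.mem_cons_self a t⟩

theorem completeHomogeneous_insert (x : ι → R) {a : ι} {S : Finset ι} (ha : a ∉ S) (m : ℤ) :
    completeHomogeneous x (insert a S) m =
      completeHomogeneous x S m + x a * completeHomogeneous x (insert a S) (m - 1) := by
  match m with
  | Int.negSucc d => simp [completeHomogeneous_of_neg, Int.negSucc_lt_zero]
  | Int.ofNat 0 => simp [completeHomogeneous_zero, completeHomogeneous_of_neg]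
  | Int.ofNat (d + 1) =>
    have hd : Int.ofNat (d + 1) - 1 = d := by simp
    rw [hd, completeHomogeneous_natCast]
    simp only [completeHomogeneous]
    rw [← sum_filter_not_add_sum_filter _ (a ∈ ·), filter_notMem_sym_insert ha,
      filter_mem_sym_succ (mem_insert_self a S),
      sum_image fun s _ t _ ↦ (Sym.cons_inj_right a s t).1, mul_sum]
    congr! 2 with s
    rw [Sym.coe_cons, Multiset.map_cons, Multiset.prod_cons]

end CompleteHomogeneous

section Interlacing

/-- The part of `lam` following `lam i`, with `lam` read as ending after `k` parts. -/
def nextPart (k : ℕ) (lam : ℕ → ℤ) (i : ℕ) : ℤ :=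
  if i + 1 < k then lam (i + 1) else 0

/-- The shape `mu` interlaces with `lam`, i.e. `lam / mu` is a horizontal strip: these are the
shapes that remain when all copies of the largest letter are removed from a tableau of shape
`lam`. -/
def Interlaces (k : ℕ) (mu lam : ℕ → ℤ) : Prop :=
  ∀ i < k, nextPart k lam i ≤ mu i ∧ mu i ≤ lam i

/-- The finite set of shapes with `k` parts interlacing with `lam`. Each shape is normalised to
vanish from index `k` on, so that it is listed once. -/
noncomputable def interlacingShapes (k : ℕ) (lam : ℕ → ℤ) : Finset (ℕ → ℤ) :=
  (Fintype.piFinset fun i : Fin k ↦ Icc (nextPart k lam i) (lam i)).map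
    ⟨fun mu ↦ Function.extend Fin.val mu 0, Function.extend_injective Fin.val_injective 0⟩

variable {k : ℕ} {lam mu : ℕ → ℤ}

theorem mem_interlacingShapes :
    mu ∈ interlacingShapes k lam ↔ Interlaces k mu lam ∧ ∀ i, k ≤ i → mu i = 0 := by
  simp only [interlacingShapes, mem_map, Fintype.mem_piFinset, mem_Icc,
    Function.Embedding.coeFn_mk]
  constructor
  · rintro ⟨mu, hmu, rfl⟩
    refine ⟨fun i hi ↦ ?_, fun i hi ↦ ?_⟩
    · simpa only [Fin.val_injective.extend_apply mu 0 ⟨i, hi⟩] using hmu ⟨i, hi⟩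
    · exact Function.extend_apply' _ _ _ fun ⟨j, hj⟩ ↦ by lia
  · rintro ⟨hmu, hzero⟩
    refine ⟨fun i ↦ mu i, fun i ↦ hmu i i.2, funext fun i ↦ ?_⟩
    by_cases hi : i < k
    · exact Fin.val_injective.extend_apply (fun i : Fin k ↦ mu i) 0 ⟨i, hi⟩
    · rw [Function.extend_apply' _ _ _ fun ⟨j, hj⟩ ↦ by lia, Pi.zero_apply, hzero i (by lia)]

theorem nextPart_of_lt {i : ℕ} (hi : i + 1 < k) : nextPart k lam i = lam (i + 1) :=
  if_pos hi

theorem nextPart_of_not_lt {i : ℕ} (hi : ¬ i + 1 < k) : nextPart k lam i = 0 :=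
  if_neg hi

namespace IsPartitionSeq

theorem nextPart_nonneg (hlam : IsPartitionSeq k lam) (i : ℕ) : 0 ≤ nextPart k lam i := by
  unfold nextPart
  split_ifs with hi
  exacts [hlam.2 _ hi, le_rfl]

theorem nextPart_le (hlam : IsPartitionSeq k lam) {i : ℕ} (hi : i < k) :
    nextPart k lam i ≤ lam i := by
  unfold nextPart
  split_ifs with hi'
  exacts [hlam.1 i hi', hlam.2 i hi]

theorem le_of_le (hlam : IsPartitionSeq k lam) {i j : ℕ} (hij : i ≤ j) (hj : j < k) :
    lam j ≤ lam i := by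
  induction j, hij using Nat.le_induction with
  | base => exact le_rfl
  | succ j _ ih => exact (hlam.1 j hj).trans (ih (by lia))

theorem forall_eq_zero_or_pos (hlam : IsPartitionSeq k lam) :
    (∀ i < k, lam i = 0) ∨ (0 < k ∧ 0 < lam 0) := by
  by_contra! h
  obtain ⟨⟨i, hi, hne⟩, hle⟩ := h
  have hpos := hlam.2 i hi
  have hanti := hlam.le_of_le i.zero_le hi
  have hzero := hle (by lia)
  lia

theorem of_interlaces (hlam : IsPartitionSeq k lam) (hmu : Interlaces k mu lam) :
    IsPartitionSeq k mu where
  left i hi := ((hmu (i + 1) hi).2.trans_eq (nextPart_of_lt hi).symm).trans (hmu i (by lia)).1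
  right i hi := (hlam.nextPart_nonneg i).trans (hmu i hi).1

end IsPartitionSeq

end Interlacing

section JacobiTrudi

variable {R : Type*}

/-- The Jacobi–Trudi matrix `(h_{lam_i - i + j})` of a shape with `k` parts, for an arbitrary
sequence `h` in place of the complete homogeneous symmetric polynomials. -/
def jacobiTrudiMatrix (h : ℤ → R) (k : ℕ) (lam : ℕ → ℤ) : Matrix (Fin k) (Fin k) R :=
  of fun i j ↦ h (lam i - i + j)

theorem jacobiTrudiMatrix_apply (h : ℤ → R) (k : ℕ) (lam : ℕ → ℤ) (i j : Fin k) :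
    jacobiTrudiMatrix h k lam i j = h (lam i - i + j) := rfl

theorem jacobiTrudiMatrix_submatrix (h : ℤ → R) (lam : ℕ → ℤ) {k l p q : ℕ} {f g : Fin k → Fin l}
    (hf : ∀ i, (f i : ℕ) = i + p) (hg : ∀ j, (g j : ℕ) = j + q) :
    (jacobiTrudiMatrix h l lam).submatrix f g =
      jacobiTrudiMatrix h k fun i ↦ lam (i + p) - p + q := by
  ext i j
  simp only [submatrix_apply, jacobiTrudiMatrix_apply, hf, hg]
  congr 1
  push_cast
  ring

variable [CommRing R]

theorem det_jacobiTrudiMatrix_const_sq (h : ℤ → R) (c : ℤ) (r : ℕ) :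
    (jacobiTrudiMatrix h (r + 1) fun _ ↦ c).det ^ 2 =
      (jacobiTrudiMatrix h r fun _ ↦ c).det * (jacobiTrudiMatrix h (r + 2) fun _ ↦ c).det +
        (jacobiTrudiMatrix h (r + 1) fun _ ↦ c - 1).det *
          (jacobiTrudiMatrix h (r + 1) fun _ ↦ c + 1).det := by
  have condensation := desnanot_jacobi (jacobiTrudiMatrix h (r + 2) fun _ ↦ c)
  rw [jacobiTrudiMatrix_submatrix (p := 1) (q := 1) h _ (by simp) (by simp),
    jacobiTrudiMatrix_submatrix (p := 0) (q := 0) h _ (by simp) (by simp),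
    jacobiTrudiMatrix_submatrix (p := 1) (q := 0) h _ (by simp) (by simp),
    jacobiTrudiMatrix_submatrix (p := 0) (q := 1) h _ (by simp) (by simp),
    jacobiTrudiMatrix_submatrix (p := 1) (q := 1) h _ (by simp) (by simp)] at condensation
  simp only [Nat.cast_zero, Nat.cast_one, sub_zero, add_zero, sub_add_cancel] at condensation
  linear_combination condensation

theorem det_jacobiTrudiMatrix_of_forall_eq_zero {h : ℤ → R} (hneg : ∀ m < 0, h m = 0)
    (hzero : h 0 = 1) {k : ℕ} {lam : ℕ → ℤ} (hlam : ∀ i < k, lam i = 0) :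
    (jacobiTrudiMatrix h k lam).det = 1 := by
  rw [det_of_isUpperTriangular]
  · exact prod_eq_one fun i _ ↦ by simp [jacobiTrudiMatrix_apply, hlam i i.2, hzero]
  · intro i j hij
    have hij : (j : ℕ) < i := hij
    exact hneg _ (by rw [hlam i i.2]; lia)

theorem det_jacobiTrudiMatrix_eq_zero {h : ℤ → R} (hpos : ∀ m > 0, h m = 0) {k : ℕ}
    {lam : ℕ → ℤ} (hk : 0 < k) (hlam : 0 < lam 0) : (jacobiTrudiMatrix h k lam).det = 0 :=
  det_eq_zero_of_row_eq_zero ⟨0, hk⟩ fun j ↦ hpos _ (by simp only; lia)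

theorem eq_sum_Icc_add_of_recurrence {g h : ℤ → R} {x : R}
    (hrec : ∀ m, h m = g m + x * h (m - 1)) {b a : ℤ} (hab : b - 1 ≤ a) :
    h a = ∑ u ∈ Icc b a, x ^ (a - u).toNat * g u + x ^ (a - b + 1).toNat * h (b - 1) := by
  induction a, hab using Int.leInduction with
  | base => simp
  | succ a hab ih =>
    have hexp : (a + 1 - b + 1).toNat = (a - b + 1).toNat + 1 := by lia
    have hsum : ∑ u ∈ Icc b a, x ^ (a + 1 - u).toNat * g u =
        x * ∑ u ∈ Icc b a, x ^ (a - u).toNat * g u := by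
      rw [mul_sum]
      refine sum_congr rfl fun u hu ↦ ?_
      have hu : (a + 1 - u).toNat = (a - u).toNat + 1 := by grind
      rw [hu, pow_succ', mul_assoc]
    rw [← insert_Icc_right_eq_Icc_add_one (by lia), sum_insert (by simp), hsum, hexp, hrec,
      add_sub_cancel_right, sub_self, Int.toNat_zero, pow_zero, pow_succ', ih]
    ring

theorem det_jacobiTrudiMatrix_of_recurrence {g h : ℤ → R} {x : R}
    (hrec : ∀ m, h m = g m + x * h (m - 1)) (hneg : ∀ m < 0, h m = 0) {k : ℕ} {lam : ℕ → ℤ}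
    (hlam : IsPartitionSeq k lam) :
    (jacobiTrudiMatrix h k lam).det =
      (of fun i j : Fin k ↦ ∑ u ∈ Icc (nextPart k lam i) (lam i),
        x ^ (lam i - u).toNat * g (u - i + j)).det := by
  have entry (i j : Fin k) : h (lam i - i + j) =
      ∑ u ∈ Icc (nextPart k lam i) (lam i), x ^ (lam i - u).toNat * g (u - i + j) +
        x ^ (lam i - nextPart k lam i + 1).toNat * h (nextPart k lam i - 1 - i + j) :=
    eq_sum_Icc_add_of_recurrence (g := fun m ↦ g (m - i + j)) (h := fun m ↦ h (m - i + j))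
      (fun m ↦ by rw [hrec]; ring_nf) (by linarith [hlam.nextPart_le i.2])
  cases k with
  | zero => simp only [det_isEmpty]
  | succ k =>
    refine det_eq_of_forall_row_eq_smul_add_succ
      (fun i ↦ x ^ (lam i - nextPart (k + 1) lam i + 1).toNat) (fun j ↦ ?_) fun i j ↦ ?_
    · have hlast : h (nextPart (k + 1) lam (Fin.last k) - 1 - (Fin.last k : ℕ) + j) = 0 :=
        hneg _ (by have := j.is_lt; rw [Fin.val_last, nextPart_of_not_lt (lt_irrefl _)]; lia)
      rw [jacobiTrudiMatrix_apply, entry, hlast, mul_zero, add_zero, of_apply]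
    · have hindex : nextPart (k + 1) lam i - 1 - (i : ℕ) + j =
          lam i.succ - (i.succ : ℕ) + j := by
        rw [nextPart_of_lt (by lia), Fin.val_succ]
        push_cast
        ring
      rw [jacobiTrudiMatrix_apply, entry, Fin.val_castSucc, hindex, of_apply,
        jacobiTrudiMatrix_apply, Fin.val_castSucc]

theorem det_jacobiTrudiMatrix_branching {g h : ℤ → R} {x : R}
    (hrec : ∀ m, h m = g m + x * h (m - 1)) (hneg : ∀ m < 0, h m = 0) {k : ℕ} {lam : ℕ → ℤ}
    (hlam : IsPartitionSeq k lam) :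
    (jacobiTrudiMatrix h k lam).det =
      ∑ mu ∈ interlacingShapes k lam, (∏ i ∈ range k, x ^ (lam i - mu i).toNat) *
        (jacobiTrudiMatrix g k mu).det := by
  rw [det_jacobiTrudiMatrix_of_recurrence hrec hneg hlam,
    det_sum_smul_row (fun i : Fin k ↦ Icc (nextPart k lam i) (lam i))
      (fun i u ↦ x ^ (lam i - u).toNat) fun i u j ↦ g (u - i + j), interlacingShapes, sum_map]
  simp only [prod_range, jacobiTrudiMatrix, Function.Embedding.coeFn_mk,
    Fin.val_injective.extend_apply]

end JacobiTrudi

section Tableaux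

theorem mem_iff_lt_card_of_isLowerSet {s : Finset ℕ} (hs : IsLowerSet (s : Set ℕ)) {j : ℕ} :
    j ∈ s ↔ j < #s := by
  constructor
  · intro hj
    have hsub : range (j + 1) ⊆ s := fun i hi ↦ hs (mem_range_succ_iff.1 hi) hj
    simpa using card_le_card hsub
  · intro hj
    by_contra hjs
    have hsub : s ⊆ range j := fun i hi ↦
      mem_range.2 (not_le.1 fun hji ↦ hjs (hs hji hi))
    exact hj.not_ge (by simpa using card_le_card hsub)

theorem le_of_forall_natCast_lt {p q : ℤ} (hq : 0 ≤ q)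
    (h : ∀ j : ℕ, (j : ℤ) < p → (j : ℤ) < q) : p ≤ q := by
  by_contra! hqp
  have hlt := h q.toNat (by lia)
  lia

attribute [ext] SSYT

variable {k : ℕ} {lam mu : ℕ → ℤ} {a b : ℕ}

namespace SSYT

instance instFinite : Finite (SSYT k lam a b) := by
  let entries (T : SSYT k lam a b) (i : Fin k) (j : Fin (lam i).toNat) : Fin (b + 1) :=
    ⟨T.entry i j, Nat.lt_succ_of_le (T.upper i j i.2 (Int.lt_toNat.1 j.2))⟩
  refine Finite.of_injective entries fun S T hST ↦ SSYT.ext (funext₂ fun i j ↦ ?_)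
  by_cases hij : i < k ∧ (j : ℤ) < lam i
  · simpa [entries] using
      congrFun₂ hST ⟨i, hij.1⟩ ⟨j, Int.lt_toNat.2 hij.2⟩
  · rw [S.zero_outside i j hij, T.zero_outside i j hij]

/-- The shape occupied by the entries of `T` that are at most `b`, i.e. different from the largest
letter `b + 1`. -/
def innerShape (T : SSYT k lam a (b + 1)) (i : ℕ) : ℤ :=
  if i < k then #{j ∈ range (lam i).toNat | T.entry i j ≤ b} else 0

theorem innerShape_of_le (T : SSYT k lam a (b + 1)) {i : ℕ} (hi : k ≤ i) : T.innerShape i = 0 :=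
  if_neg hi.not_gt

theorem innerShape_nonneg (T : SSYT k lam a (b + 1)) (i : ℕ) : 0 ≤ T.innerShape i := by
  unfold innerShape
  positivity

theorem lt_innerShape_iff (T : SSYT k lam a (b + 1)) {i j : ℕ} (hi : i < k) :
    (j : ℤ) < T.innerShape i ↔ (j : ℤ) < lam i ∧ T.entry i j ≤ b := by
  have hlower : IsLowerSet (({j ∈ range (lam i).toNat | T.entry i j ≤ b} : Finset ℕ) : Set ℕ) := by
    intro j j' hj' hj
    simp only [coe_filter, mem_range, Int.lt_toNat, Set.mem_ofPred_eq] at hj ⊢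
    exact ⟨by lia, (T.row_weak i j' j hi hj' hj.1).trans hj.2⟩
  rw [innerShape, if_pos hi, Nat.cast_lt, ← mem_iff_lt_card_of_isLowerSet hlower, mem_filter,
    mem_range, Int.lt_toNat]

theorem interlaces_innerShape (hlam : IsPartitionSeq k lam) (T : SSYT k lam a (b + 1)) :
    Interlaces k T.innerShape lam := by
  refine fun i hi ↦ ⟨?_, ?_⟩
  · refine le_of_forall_natCast_lt (T.innerShape_nonneg i) fun j hj ↦ ?_
    have hi' : i + 1 < k := by
      by_contra hi'
      rw [nextPart_of_not_lt hi'] at hj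
      lia
    have hcol := T.col_strict i (i + 1) j i.lt_succ_self hi' (by rwa [nextPart_of_lt hi'] at hj)
    have hupper := T.upper (i + 1) j hi' (by rwa [nextPart_of_lt hi'] at hj)
    exact (T.lt_innerShape_iff hi).2 ⟨hj.trans_le (hlam.nextPart_le hi), by lia⟩
  · exact le_of_forall_natCast_lt (hlam.2 i hi) fun j hj ↦ ((T.lt_innerShape_iff hi).1 hj).1

theorem innerShape_mem_interlacingShapes (hlam : IsPartitionSeq k lam)
    (T : SSYT k lam a (b + 1)) : T.innerShape ∈ interlacingShapes k lam :=
  mem_interlacingShapes.2 ⟨T.interlaces_innerShape hlam, fun _ ↦ T.innerShape_of_le⟩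

/-- The tableau formed by the entries of `T` different from the largest letter `b + 1`. -/
def restrict (T : SSYT k lam a (b + 1)) : SSYT k T.innerShape a b where
  entry i j := if T.entry i j ≤ b then T.entry i j else 0
  zero_outside i j hij := by
    split_ifs with hb
    · refine T.zero_outside i j fun hlam ↦ hij ⟨hlam.1, ?_⟩
      exact (T.lt_innerShape_iff hlam.1).2 ⟨hlam.2, hb⟩
    · rfl
  lower i j hi hj := by
    obtain ⟨hlam, hb⟩ := (T.lt_innerShape_iff hi).1 hj
    rw [if_pos hb]
    exact T.lower i j hi hlam
  upper i j _ _ := by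
    split_ifs with hb
    exacts [hb, b.zero_le]
  row_weak i j₁ j₂ hi hj₁₂ hj₂ := by
    obtain ⟨hlam, hb⟩ := (T.lt_innerShape_iff hi).1 hj₂
    have hrow := T.row_weak i j₁ j₂ hi hj₁₂ hlam
    rwa [if_pos hb, if_pos (hrow.trans hb)]
  col_strict i₁ i₂ j hi₁₂ hi₂ hj := by
    obtain ⟨hlam, hb⟩ := (T.lt_innerShape_iff hi₂).1 hj
    have hcol := T.col_strict i₁ i₂ j hi₁₂ hi₂ hlam
    rwa [if_pos hb, if_pos (hcol.le.trans hb)]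

/-- The tableau of shape `lam` obtained from `T` by filling the horizontal strip `lam / mu` with
the letter `b + 1`. -/
def extend (hab : a ≤ b + 1) (hlam : IsPartitionSeq k lam) (hmu : Interlaces k mu lam)
    (T : SSYT k mu a b) : SSYT k lam a (b + 1) where
  entry i j :=
    if i < k ∧ (j : ℤ) < mu i then T.entry i j else if i < k ∧ (j : ℤ) < lam i then b + 1 else 0
  zero_outside i j hij := by
    rw [if_neg fun hmu' ↦ hij ⟨hmu'.1, hmu'.2.trans_le (hmu i hmu'.1).2⟩, if_neg hij]
  lower i j hi hj := by
    rw [if_pos (And.intro hi hj)]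
    split_ifs with hmu'
    exacts [T.lower i j hi hmu'.2, hab]
  upper i j hi hj := by
    rw [if_pos (And.intro hi hj)]
    split_ifs with hmu'
    exacts [(T.upper i j hi hmu'.2).trans b.le_succ, le_rfl]
  row_weak i j₁ j₂ hi hj₁₂ hj₂ := by
    rw [if_pos (show i < k ∧ (j₁ : ℤ) < lam i by lia), if_pos (And.intro hi hj₂)]
    split_ifs with h₁ h₂ h₂
    · exact T.row_weak i j₁ j₂ hi hj₁₂ h₂.2
    · exact (T.upper i j₁ hi h₁.2).trans b.le_succ
    · lia
    · rfl
  col_strict i₁ i₂ j hi₁₂ hi₂ hj := by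
    have hi₁ : i₁ < k := hi₁₂.trans hi₂
    have hnext : nextPart k lam i₁ = lam (i₁ + 1) := nextPart_of_lt (by lia)
    have hj₁ : (j : ℤ) < mu i₁ := calc
      (j : ℤ) < lam i₂ := hj
      _ ≤ lam (i₁ + 1) := hlam.le_of_le hi₁₂ hi₂
      _ ≤ mu i₁ := hnext ▸ (hmu i₁ hi₁).1
    rw [if_pos (And.intro hi₁ hj₁), if_pos (And.intro hi₂ hj)]
    split_ifs with h₂
    · exact T.col_strict i₁ i₂ j hi₁₂ hi₂ h₂.2
    · exact Nat.lt_succ_of_le (T.upper i₁ j hi₁ hj₁)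

section Extend

variable (hab : a ≤ b + 1) (hlam : IsPartitionSeq k lam) (hmu : Interlaces k mu lam)
  (T : SSYT k mu a b)

theorem extend_entry_of_lt {i j : ℕ} (hi : i < k) (hj : (j : ℤ) < mu i) :
    (T.extend hab hlam hmu).entry i j = T.entry i j :=
  if_pos ⟨hi, hj⟩

theorem extend_entry_of_le_of_lt {i j : ℕ} (hi : i < k) (hmuj : mu i ≤ j) (hj : (j : ℤ) < lam i) :
    (T.extend hab hlam hmu).entry i j = b + 1 :=
  (if_neg fun h ↦ hmuj.not_gt h.2).trans (if_pos ⟨hi, hj⟩)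

theorem innerShape_extend (hzero : ∀ i, k ≤ i → mu i = 0) :
    (T.extend hab hlam hmu).innerShape = mu := by
  funext i
  by_cases hi : i < k
  · have hiff (j : ℕ) : (j : ℤ) < (T.extend hab hlam hmu).innerShape i ↔ (j : ℤ) < mu i := by
      rw [lt_innerShape_iff _ hi]
      refine ⟨fun ⟨hj, hb⟩ ↦ ?_, fun hj ↦ ⟨hj.trans_le (hmu i hi).2, ?_⟩⟩
      · by_contra! hmuj
        rw [T.extend_entry_of_le_of_lt hab hlam hmu hi hmuj hj] at hb
        exact b.not_succ_le_self hb
      · exact (T.extend_entry_of_lt hab hlam hmu hi hj).trans_le (T.upper i j hi hj)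
    have hnonneg : 0 ≤ mu i := (hlam.of_interlaces hmu).2 i hi
    exact le_antisymm (le_of_forall_natCast_lt hnonneg fun j ↦ (hiff j).1)
      (le_of_forall_natCast_lt (innerShape_nonneg _ i) fun j ↦ (hiff j).2)
  · rw [innerShape_of_le _ (not_lt.1 hi), hzero i (not_lt.1 hi)]

theorem weight_extend :
    (T.extend hab hlam hmu).weight =
      (∏ i ∈ range k, MvPolynomial.X (b + 1) ^ (lam i - mu i).toNat) * T.weight := by
  unfold weight
  rw [← prod_mul_distrib]
  refine prod_congr rfl fun i hi ↦ ?_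
  have hi : i < k := mem_range.1 hi
  have hle : mu i ≤ lam i := (hmu i hi).2
  have hnonneg : 0 ≤ mu i := (hlam.of_interlaces hmu).2 i hi
  have hlength : (lam i).toNat = (mu i).toNat + (lam i - mu i).toNat := by lia
  have hinner : ∏ j ∈ range (mu i).toNat,
      (MvPolynomial.X ((T.extend hab hlam hmu).entry i j) : MvPolynomial ℕ ℤ) =
        ∏ j ∈ range (mu i).toNat, MvPolynomial.X (T.entry i j) := by
    refine prod_congr rfl fun j hj ↦ ?_
    rw [T.extend_entry_of_lt hab hlam hmu hi (by grind)]
  have hstrip : ∏ j ∈ range (lam i - mu i).toNat,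
      (MvPolynomial.X ((T.extend hab hlam hmu).entry i ((mu i).toNat + j)) : MvPolynomial ℕ ℤ) =
        MvPolynomial.X (b + 1) ^ (lam i - mu i).toNat := by
    rw [prod_eq_pow_card (b := MvPolynomial.X (b + 1)) fun j hj ↦ ?_, card_range]
    have hj := mem_range.1 hj
    rw [T.extend_entry_of_le_of_lt hab hlam hmu hi (by lia) (by lia)]
  rw [hlength, prod_range_add, hinner, hstrip, mul_comm]

end Extend

theorem extend_restrict (hab : a ≤ b + 1) (hlam : IsPartitionSeq k lam)
    (T : SSYT k lam a (b + 1)) :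
    T.restrict.extend hab hlam (T.interlaces_innerShape hlam) = T := by
  ext i j
  by_cases hij : i < k ∧ (j : ℤ) < lam i
  · have hiff := T.lt_innerShape_iff (j := j) hij.1
    by_cases hb : T.entry i j ≤ b
    · rw [extend_entry_of_lt _ _ _ _ hij.1 (hiff.2 ⟨hij.2, hb⟩)]
      exact if_pos hb
    · rw [extend_entry_of_le_of_lt _ _ _ _ hij.1 (by grind) hij.2]
      have hupper := T.upper i j hij.1 hij.2
      lia
  · rw [zero_outside _ i j hij, zero_outside _ i j hij]

theorem extend_injective (hab : a ≤ b + 1) (hlam : IsPartitionSeq k lam)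
    (hmu : Interlaces k mu lam) :
    Function.Injective fun T : SSYT k mu a b ↦ T.extend hab hlam hmu := by
  intro S T hST
  ext i j
  by_cases hij : i < k ∧ (j : ℤ) < mu i
  · rw [← S.extend_entry_of_lt hab hlam hmu hij.1 hij.2,
      ← T.extend_entry_of_lt hab hlam hmu hij.1 hij.2]
    exact congrArg (fun T ↦ T.entry i j) hST
  · rw [S.zero_outside i j hij, T.zero_outside i j hij]

end SSYT

theorem schur_of_isPartitionSeq (hlam : IsPartitionSeq k lam) :
    schur k lam a b = ∑ᶠ T : SSYT k lam a b, T.weight :=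
  if_pos hlam

open scoped Classical in
theorem sum_weight_filter_innerShape_eq [Fintype (SSYT k lam a (b + 1))] [Fintype (SSYT k mu a b)]
    (hab : a ≤ b + 1) (hlam : IsPartitionSeq k lam) (hmu : mu ∈ interlacingShapes k lam) :
    ∑ T : SSYT k lam a (b + 1) with T.innerShape = mu, T.weight =
      (∏ i ∈ range k, MvPolynomial.X (b + 1) ^ (lam i - mu i).toNat) *
        ∑ T : SSYT k mu a b, T.weight := by
  obtain ⟨hinterlaces, hzero⟩ := mem_interlacingShapes.1 hmu
  rw [mul_sum]
  symm
  refine sum_bij (fun T _ ↦ T.extend hab hlam hinterlaces) (fun T _ ↦ ?_)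
    (fun S _ T _ hST ↦ SSYT.extend_injective hab hlam hinterlaces hST) (fun T hT ↦ ?_)
    fun T _ ↦ (T.weight_extend hab hlam hinterlaces).symm
  · exact mem_filter.2 ⟨mem_univ _, T.innerShape_extend hab hlam hinterlaces hzero⟩
  · obtain rfl := (mem_filter.1 hT).2
    exact ⟨T.restrict, mem_univ _, T.extend_restrict hab hlam⟩

theorem schur_branching (hab : a ≤ b + 1) (hlam : IsPartitionSeq k lam) :
    schur k lam a (b + 1) =
      ∑ mu ∈ interlacingShapes k lam,
        (∏ i ∈ range k, MvPolynomial.X (b + 1) ^ (lam i - mu i).toNat) * schur k mu a b := by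
  classical
  have fintype (nu : ℕ → ℤ) (d : ℕ) : Fintype (SSYT k nu a d) := Fintype.ofFinite _
  rw [schur_of_isPartitionSeq hlam, finsum_eq_sum_of_fintype,
    ← sum_fiberwise_of_maps_to fun T _ ↦ T.innerShape_mem_interlacingShapes hlam]
  refine sum_congr rfl fun mu hmu ↦ ?_
  rw [sum_weight_filter_innerShape_eq hab hlam hmu,
    schur_of_isPartitionSeq (hlam.of_interlaces (mem_interlacingShapes.1 hmu).1),
    finsum_eq_sum_of_fintype]

theorem schur_of_forall_eq_zero (hlam : ∀ i < k, lam i = 0) : schur k lam a b = 1 := by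
  have hpart : IsPartitionSeq k lam :=
    ⟨fun i hi ↦ by rw [hlam i (by lia), hlam (i + 1) hi], fun i hi ↦ (hlam i hi).ge⟩
  have houtside (i j : ℕ) (hi : i < k) : ¬ (j : ℤ) < lam i := by rw [hlam i hi]; lia
  let emptyTableau : SSYT k lam a b :=
    { entry := 0
      zero_outside := fun _ _ _ ↦ rfl
      lower := fun i j hi hj ↦ absurd hj (houtside i j hi)
      upper := fun i j hi hj ↦ absurd hj (houtside i j hi)
      row_weak := fun _ _ _ _ _ _ ↦ le_rfl
      col_strict := fun _ i j _ hi hj ↦ absurd hj (houtside i j hi) }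
  have hunique (T : SSYT k lam a b) : T = emptyTableau := by
    ext i j
    exact T.zero_outside i j fun hij ↦ houtside i j hij.1 hij.2
  rw [schur_of_isPartitionSeq hpart, finsum_eq_single _ emptyTableau fun T hT ↦
    absurd (hunique T) hT]
  refine prod_eq_one fun i hi ↦ ?_
  rw [hlam i (mem_range.1 hi), Int.toNat_zero, prod_range_zero]

theorem schur_eq_zero_of_lt (hba : b < a) (hk : 0 < k) (hlam : 0 < lam 0) :
    schur k lam a b = 0 := by
  have : IsEmpty (SSYT k lam a b) :=
    ⟨fun T ↦ hba.not_ge ((T.lower 0 0 hk hlam).trans (T.upper 0 0 hk hlam))⟩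
  unfold schur
  split_ifs
  exacts [finsum_of_isEmpty _, rfl]

end Tableaux

theorem schur_eq_det_jacobiTrudiMatrix_of_lt {k : ℕ} {lam : ℕ → ℤ} {a b : ℕ} (hba : b < a)
    (hlam : IsPartitionSeq k lam) :
    schur k lam a b =
      (jacobiTrudiMatrix (completeHomogeneous MvPolynomial.X (Icc a b)) k lam).det := by
  rw [Icc_eq_empty hba.not_ge]
  rcases hlam.forall_eq_zero_or_pos with hzero | ⟨hk, hpos⟩
  · rw [schur_of_forall_eq_zero hzero, det_jacobiTrudiMatrix_of_forall_eq_zero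
      (fun _ ↦ completeHomogeneous_of_neg _ _) (completeHomogeneous_zero _ _) hzero]
  · rw [schur_eq_zero_of_lt hba hk hpos, det_jacobiTrudiMatrix_eq_zero
      (fun _ hm ↦ completeHomogeneous_empty _ hm.ne') hk hpos]

theorem schur_eq_det_jacobiTrudiMatrix {k : ℕ} {lam : ℕ → ℤ} {a : ℕ} (b : ℕ) (ha : 1 ≤ a)
    (hlam : IsPartitionSeq k lam) :
    schur k lam a b =
      (jacobiTrudiMatrix (completeHomogeneous MvPolynomial.X (Icc a b)) k lam).det := by
  induction b generalizing lam with
  | zero => exact schur_eq_det_jacobiTrudiMatrix_of_lt ha hlam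
  | succ b ih =>
    rcases lt_or_ge (b + 1) a with hba | hab
    · exact schur_eq_det_jacobiTrudiMatrix_of_lt hba hlam
    have hrec (m : ℤ) : completeHomogeneous MvPolynomial.X (Icc a (b + 1)) m =
        completeHomogeneous MvPolynomial.X (Icc a b) m + (MvPolynomial.X (b + 1) :
          MvPolynomial ℕ ℤ) * completeHomogeneous MvPolynomial.X (Icc a (b + 1)) (m - 1) := by
      rw [← insert_Icc_right_eq_Icc_add_one hab]
      exact completeHomogeneous_insert _ (by simp) m
    rw [schur_branching hab hlam, det_jacobiTrudiMatrix_branching hrec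
      (fun _ ↦ completeHomogeneous_of_neg _ _) hlam]
    refine sum_congr rfl fun mu hmu ↦ ?_
    rw [ih (hlam.of_interlaces (mem_interlacingShapes.1 hmu).1)]

theorem isPartitionSeq_const (k : ℕ) {c : ℤ} (hc : 0 ≤ c) : IsPartitionSeq k fun _ ↦ c :=
  ⟨fun _ _ ↦ le_rfl, fun _ _ ↦ hc⟩

theorem stmt_14_general (a b c r : ℕ) (ha : 1 ≤ a) (hc : 1 ≤ c) (hr : 1 ≤ r) :
    schur r (fun _ => (c : ℤ)) a b ^ 2 =
      schur (r - 1) (fun _ => (c : ℤ)) a b * schur (r + 1) (fun _ => (c : ℤ)) a b +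
        schur r (fun _ => (c : ℤ) - 1) a b * schur r (fun _ => (c : ℤ) + 1) a b := by
  obtain ⟨r, rfl⟩ := Nat.exists_eq_add_of_le' hr
  have jacobiTrudi (k : ℕ) {d : ℤ} (hd : 0 ≤ d) := schur_eq_det_jacobiTrudiMatrix b ha
    (isPartitionSeq_const k hd)
  rw [Nat.add_sub_cancel, jacobiTrudi _ (by lia), jacobiTrudi _ (by lia), jacobiTrudi _ (by lia),
    jacobiTrudi _ (by lia), jacobiTrudi _ (by lia)]
  exact det_jacobiTrudiMatrix_const_sq _ c r

/-- Kirillov's identity: for `c, r ≥ 1` and `n ≥ 1`: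
`(s^{[n]}_{c^r})² = s^{[n]}_{c^{r-1}} · s^{[n]}_{c^{r+1}} + s^{[n]}_{(c-1)^r} · s^{[n]}_{(c+1)^r}`. -/
theorem stmt_14 (c r n : ℕ) (hc : 1 ≤ c) (hr : 1 ≤ r) (hn : 1 ≤ n) :
    schur r (fun _ => (c : ℤ)) 1 n ^ 2 =
      schur (r - 1) (fun _ => (c : ℤ)) 1 n * schur (r + 1) (fun _ => (c : ℤ)) 1 n +
        schur r (fun _ => (c : ℤ) - 1) 1 n * schur r (fun _ => (c : ℤ) + 1) 1 n :=
  stmt_14_general 1 n c r le_rfl hc hr
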